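/- In a finite graph G with n vertices and maximum degree Δ ≥ 1, the number of connected vertex subsets of size k ≥ 1 is at most n · Δ^{2k−2}. -/

import Mathlib

/-- The vertex sets visited by walks of length `m` starting at `v`. -/
def walkSets {V : Type*} [Fintype V] [DecidableEq V]
    (G : SimpleGraph V) [DecidableRel G.Adj] : ℕ → V → Finset (Finset V)
  | 0, v => {{v}}
  | m + 1, v => (G.neighborFinset v).biUnion fun u => (walkSets G m u).image (insert v)

theorem walkSets_card {V : Type*} [Fintype V] [DecidableEq V]
    (G : SimpleGraph V) [DecidableRel G.Adj] (Δ : ℕ)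
    (hΔ : ∀ v, G.degree v ≤ Δ) (m : ℕ) (v : V) : (walkSets G m v).card ≤ Δ ^ m := by
  induction m generalizing v with
  | zero => simp [walkSets]
  | succ m ih =>
    rw [walkSets, pow_succ']
    refine (Finset.card_biUnion_le_card_mul _ _ (Δ ^ m) ?_).trans
      (Nat.mul_le_mul_right _ (hΔ v))
    intro u _
    exact Finset.card_image_le.trans (ih u)

theorem support_mem_walkSets {V : Type*} [Fintype V] [DecidableEq V]
    (G : SimpleGraph V) [DecidableRel G.Adj] {u v : V} (p : G.Walk u v) :
    p.support.toFinset ∈ walkSets G p.length u := by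
  induction p with
  | nil => simp [walkSets]
  | @cons a b c h p ih =>
    simp only [SimpleGraph.Walk.length_cons, walkSets, Finset.mem_biUnion, Finset.mem_image,
      SimpleGraph.mem_neighborFinset]
    exact ⟨b, h, _, ih, by simp⟩

theorem exists_edge_out {V : Type*} [DecidableEq V] (G : SimpleGraph V) (S T : Finset V)
    (hS : (G.induce (↑S : Set V)).Connected) (hTS : T ⊆ S) (hT : T.Nonempty) (hne : T ≠ S) :
    ∃ x ∈ T, ∃ y ∈ S, y ∉ T ∧ G.Adj x y := by
  obtain ⟨a, ha⟩ := hT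
  obtain ⟨b, hb, hbT⟩ := Finset.exists_of_ssubset (hTS.ssubset_of_ne hne)
  obtain ⟨p⟩ := hS.preconnected ⟨a, hTS ha⟩ ⟨b, hb⟩
  obtain ⟨d, -, h1, h2⟩ := p.exists_boundary_dart {z | (z : V) ∈ T} ha hbT
  exact ⟨_, h1, _, d.snd.2, h2, d.adj⟩

theorem exists_walk_in {V : Type*} [DecidableEq V] (G : SimpleGraph V) (S : Finset V)
    (hS : (G.induce (↑S : Set V)).Connected) (j : ℕ) (hj : j + 1 ≤ S.card) :
    ∃ (u : V) (p : G.Walk u u), p.length = 2 * j ∧ p.support.toFinset ⊆ S ∧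
      p.support.toFinset.card = j + 1 := by
  induction j with
  | zero =>
    obtain ⟨a, ha⟩ := Finset.card_pos.1 (show 0 < S.card by omega)
    exact ⟨a, .nil, by simp, by simpa using ha, by simp⟩
  | succ j ih =>
    obtain ⟨u, p, hl, hs, hc⟩ := ih (by omega)
    obtain ⟨x, hx, y, hy, hyT, hxy⟩ := exists_edge_out G S _ hS hs
      (Finset.card_pos.1 (by omega)) (by rintro h; rw [h] at hc; omega)
    have hx' : x ∈ p.support := by simpa using hx
    have hsp : ((p.takeUntil x hx').append (.cons hxy (.cons hxy.symm
        (p.dropUntil x hx')))).support.toFinset = insert y p.support.toFinset := by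
      ext z
      have h := congrArg (fun q => z ∈ q.support) (p.take_spec hx')
      simp only [SimpleGraph.Walk.mem_support_append_iff, eq_iff_iff] at h
      simp only [List.mem_toFinset, SimpleGraph.Walk.mem_support_append_iff, Finset.mem_insert,
        SimpleGraph.Walk.support_cons, List.mem_cons, ← h]
      have : z = x → z ∈ (p.dropUntil x hx').support := by rintro rfl; simp
      tauto
    refine ⟨u, _, ?_, hsp ▸ Finset.insert_subset hy hs, ?_⟩
    · have h := congrArg (fun q => q.length) (p.take_spec hx')
      simp only [SimpleGraph.Walk.length_append] at h
      simp only [SimpleGraph.Walk.length_append, SimpleGraph.Walk.length_cons]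
      omega
    · rw [hsp, Finset.card_insert_of_notMem hyT, hc]

/-- In a graph with n vertices and maximum degree Δ ≥ 1, the number of connected
vertex subsets of size k ≥ 1 is at most n · Δ^(2k-2). -/
theorem stmt_7 {V : Type*} [Fintype V] [DecidableEq V]
    (G : SimpleGraph V) [DecidableRel G.Adj] (Δ k : ℕ)
    (hΔ : ∀ v, G.degree v ≤ Δ) (hΔ1 : 1 ≤ Δ) (hk : 1 ≤ k) :
    Nat.card {S : Finset V // S.card = k ∧ (G.induce (↑S : Set V)).Connected}
      ≤ Fintype.card V * Δ ^ (2 * k - 2) := by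
  have key : ∀ S : Finset V, S.card = k ∧ (G.induce (↑S : Set V)).Connected →
      S ∈ (Finset.univ : Finset V).biUnion (walkSets G (2 * k - 2)) := by
    rintro S ⟨hc, hS⟩
    obtain ⟨u, p, hl, hs, hcp⟩ := exists_walk_in G S hS (k - 1) (by omega)
    have he := Finset.eq_of_subset_of_card_le hs (by omega)
    have hm := support_mem_walkSets G p
    rw [he, hl, show 2 * (k - 1) = 2 * k - 2 by omega] at hm
    exact Finset.mem_biUnion.2 ⟨u, Finset.mem_univ _, hm⟩
  calc Nat.card {S : Finset V // S.card = k ∧ (G.induce (↑S : Set V)).Connected}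
      ≤ Nat.card {S // S ∈ (Finset.univ : Finset V).biUnion (walkSets G (2 * k - 2))} :=
        Nat.card_le_card_of_injective (fun S => ⟨S.1, key S.1 S.2⟩) (by
          intro a b h
          exact Subtype.ext (congrArg (fun z => z.1) h))
    _ = ((Finset.univ : Finset V).biUnion (walkSets G (2 * k - 2))).card := by
        rw [Nat.card_eq_fintype_card, Fintype.card_coe]
    _ ≤ _ := Finset.card_biUnion_le_card_mul _ _ _ fun v _ => walkSets_card G Δ hΔ _ v
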